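/- For σ > 0, define k : ℝ → ℝ by k(r) = e^{−r²/(2σ²)} − √π · (|r|/(σ√2)) · erfc(|r|/(σ√2)), where erfc(x) = (2/√π) ∫_x^∞ e^{−t²} dt. Then for every t ≠ 0: ∫_ℝ k(r) e^{i r t} dr = (√(2π)/(σ t²)) · (1 − e^{−σ² t²/2}). -/

import Mathlib

open MeasureTheory Real

/-- The complementary error function `erfc(x) = (2/√π) ∫_x^∞ e^{-t²} dt`. -/
noncomputable def erfc (x : ℝ) : ℝ :=
  (2 / Real.sqrt π) * ∫ t in Set.Ioi x, Real.exp (-t ^ 2)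

noncomputable def auxE (x : ℝ) : ℝ := ∫ t in Set.Ioi x, Real.exp (-t ^ 2)

lemma aux_int : Integrable (fun t : ℝ => Real.exp (-t ^ 2)) := by
  simpa using integrable_exp_neg_mul_sq (b := 1) one_pos

lemma auxE_eq (x : ℝ) : auxE x = auxE 0 - ∫ t in (0:ℝ)..x, Real.exp (-t ^ 2) := by
  have := intervalIntegral.integral_Ioi_sub_Ioi' (a := (0:ℝ)) (b := x) (μ := volume)
    aux_int.integrableOn aux_int.integrableOn
  unfold auxE
  linarith

lemma auxE_deriv (x : ℝ) : HasDerivAt auxE (-Real.exp (-x ^ 2)) x := by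
  have hc : Continuous (fun t : ℝ => Real.exp (-t ^ 2)) := by fun_prop
  have h := (hc.integral_hasStrictDerivAt 0 x).hasDerivAt.const_sub (auxE 0)
  exact h.congr_of_eventuallyEq (Filter.Eventually.of_forall auxE_eq)

lemma auxE_nonneg (x : ℝ) : 0 ≤ auxE x :=
  integral_nonneg (fun _ => (Real.exp_pos _).le)

lemma auxE_tendsto : Filter.Tendsto auxE Filter.atTop (nhds 0) := by
  have h := intervalIntegral_tendsto_integral_Ioi (0:ℝ) aux_int.integrableOn Filter.tendsto_id
  have h2 := h.const_sub (auxE 0)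
  have h3 : auxE 0 - ∫ t in Set.Ioi (0:ℝ), Real.exp (-t ^ 2) = 0 := sub_self _
  rw [h3] at h2
  exact h2.congr (fun x => (auxE_eq x).symm)

noncomputable def auxg (x : ℝ) : ℝ := Real.exp (-x ^ 2) - 2 * x * auxE x

lemma exp_deriv_aux (x : ℝ) :
    HasDerivAt (fun x : ℝ => Real.exp (-x ^ 2)) (-2 * x * Real.exp (-x ^ 2)) x := by
  have h0 : HasDerivAt (fun x : ℝ => -x ^ 2) (-(2 * x)) x := by
    simpa using (hasDerivAt_pow 2 x).fun_neg
  exact h0.exp.congr_deriv (by ring)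

lemma auxg_deriv (x : ℝ) : HasDerivAt auxg (-2 * auxE x) x := by
  have h := (exp_deriv_aux x).sub (((hasDerivAt_id x).const_mul 2).mul (auxE_deriv x))
  exact h.congr_deriv (by simp only [id]; ring)

lemma exp_tendsto_aux : Filter.Tendsto (fun x : ℝ => Real.exp (-x ^ 2)) Filter.atTop (nhds 0) := by
  apply Real.tendsto_exp_atBot.comp
  exact Filter.tendsto_neg_atTop_atBot.comp (Filter.tendsto_pow_atTop two_ne_zero)

lemma auxg_nonneg {x : ℝ} (hx : 0 ≤ x) : 0 ≤ auxg x := by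
  have hd : ∀ y ∈ Set.Ioi x, HasDerivAt (fun y : ℝ => -Real.exp (-y ^ 2))
      (2 * y * Real.exp (-y ^ 2)) y := by
    intro y _
    exact (exp_deriv_aux y).fun_neg.congr_deriv (by ring)
  have hpos : ∀ y ∈ Set.Ioi x, 0 ≤ 2 * y * Real.exp (-y ^ 2) := by
    intro y hy
    have : x < y := hy
    have : 0 ≤ y := by linarith
    positivity
  have ht : Filter.Tendsto (fun y : ℝ => -Real.exp (-y ^ 2)) Filter.atTop (nhds 0) := by
    simpa using exp_tendsto_aux.neg
  have hc : ContinuousWithinAt (fun y : ℝ => -Real.exp (-y ^ 2)) (Set.Ici x) x := by fun_prop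
  have hi := integrableOn_Ioi_deriv_of_nonneg hc hd hpos ht
  have he := integral_Ioi_of_hasDerivAt_of_nonneg hc hd hpos ht
  have hle : ∫ y in Set.Ioi x, 2 * x * Real.exp (-y ^ 2)
      ≤ ∫ y in Set.Ioi x, 2 * y * Real.exp (-y ^ 2) := by
    apply setIntegral_mono_on (aux_int.integrableOn.const_mul _) hi measurableSet_Ioi
    intro y hy
    have : x < y := hy
    gcongr
  rw [he, integral_const_mul] at hle
  unfold auxg auxE
  linarith

lemma auxg_le {x : ℝ} (hx : 0 ≤ x) : auxg x ≤ Real.exp (-x ^ 2) := by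
  have := auxE_nonneg x
  unfold auxg
  have : 0 ≤ 2 * x * auxE x := by positivity
  linarith

lemma auxg_cont : Continuous auxg :=
  continuous_iff_continuousAt.2 fun x => (auxg_deriv x).continuousAt

lemma auxg_norm (x : ℝ) : |(auxg (|x|))| ≤ Real.exp (-x ^ 2) := by
  rw [abs_of_nonneg (auxg_nonneg (abs_nonneg x))]
  simpa using auxg_le (abs_nonneg x)

lemma aux_gauss (w : ℝ) : ∫ x in Set.Ioi (0:ℝ), Real.exp (-x ^ 2) * Real.cos (w * x)
    = √π / 2 * Real.exp (-(w ^ 2 / 4)) := by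
  have h1 := integral_comp_abs (f := fun x : ℝ => Real.exp (-x ^ 2) * Real.cos (w * x))
  have h2 : ∀ x : ℝ, Real.exp (-|x| ^ 2) * Real.cos (w * |x|)
      = Real.exp (-x ^ 2) * Real.cos (w * x) := by
    intro x
    rw [sq_abs]
    rcases abs_choice x with h | h <;> simp [h]
  simp only [h2] at h1
  have h3 := fourierIntegral_gaussian (b := 1) (by simp) (w : ℂ)
  have hi : Integrable (fun x : ℝ => Complex.exp (Complex.I * w * x) * Complex.exp (-1 * (x:ℂ) ^ 2)) := by
    have := integrable_cexp_quadratic (b := 1) (by simp) (Complex.I * w) 0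
    refine this.congr (Filter.Eventually.of_forall fun x => ?_)
    simp only [← Complex.exp_add]
    congr 1; ring
  have h4 := integral_re hi
  have h5 : ∀ x : ℝ, RCLike.re (Complex.exp (Complex.I * w * x) * Complex.exp (-1 * (x:ℂ) ^ 2))
      = Real.exp (-x ^ 2) * Real.cos (w * x) := by
    intro x
    have : Complex.exp (-1 * (x:ℂ) ^ 2) = ((Real.exp (-x ^ 2) : ℝ) : ℂ) := by
      push_cast; congr 1; ring
    rw [this]
    have e : Complex.I * w * x = ((w * x : ℝ) : ℂ) * Complex.I := by push_cast; ring
    rw [e]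
    simp only [RCLike.re_to_complex, Complex.re_mul_ofReal, Complex.exp_ofReal_mul_I_re]
    ring
  simp only [h5] at h4
  rw [h3] at h4
  have h6 : ((π:ℂ) / 1) ^ (1 / 2 : ℂ) * Complex.exp (-(w:ℂ) ^ 2 / (4 * 1))
      = ((√π * Real.exp (-(w ^ 2 / 4)) : ℝ) : ℂ) := by
    rw [Real.sqrt_eq_rpow, Complex.ofReal_mul, Complex.ofReal_cpow Real.pi_pos.le]
    push_cast
    simp [neg_div]
  rw [h6] at h4
  simp only [RCLike.re_to_complex, Complex.ofReal_re] at h4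
  linarith

lemma aux_half (w : ℝ) (hw : w ≠ 0) : ∫ x in Set.Ioi (0:ℝ), auxg x * Real.cos (w * x)
    = √π / w ^ 2 * (1 - Real.exp (-(w ^ 2 / 4))) := by
  have hgi : Integrable (fun x : ℝ => Real.exp (-x ^ 2) * Real.cos (w * x)) := by
    refine aux_int.mono' (by fun_prop) (Filter.Eventually.of_forall fun x => ?_)
    rw [norm_mul, Real.norm_eq_abs, Real.norm_eq_abs, Real.abs_exp]
    exact mul_le_of_le_one_right (Real.exp_pos _).le (Real.abs_cos_le_one _)
  have hki : IntegrableOn (fun x : ℝ => auxg x * Real.cos (w * x)) (Set.Ioi 0) := by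
    refine Integrable.mono' aux_int.integrableOn
      ((auxg_cont.mul (by fun_prop)).aestronglyMeasurable) ?_
    filter_upwards [ae_restrict_mem measurableSet_Ioi] with x hx
    have hx' : (0:ℝ) ≤ x := le_of_lt hx
    rw [norm_mul, Real.norm_eq_abs, Real.norm_eq_abs, abs_of_nonneg (auxg_nonneg hx')]
    exact (mul_le_of_le_one_right (auxg_nonneg hx') (Real.abs_cos_le_one _)).trans (auxg_le hx')
  have hF : ∀ x ∈ Set.Ici (0:ℝ), HasDerivAt
      (fun x => auxg x * (Real.sin (w * x) / w) + (-2 * auxE x) * (Real.cos (w * x) / w ^ 2))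
      (auxg x * Real.cos (w * x) + 2 / w ^ 2 * (Real.exp (-x ^ 2) * Real.cos (w * x))) x := by
    intro x _
    have hl : HasDerivAt (fun x : ℝ => w * x) w x := by
      simpa using (hasDerivAt_id x).const_mul w
    have h := ((auxg_deriv x).mul (hl.sin.div_const w)).add
      (((auxE_deriv x).const_mul (-2)).mul (hl.cos.div_const (w ^ 2)))
    refine h.congr_deriv ?_
    field_simp
    ring
  have hs : IntegrableOn (fun x => auxg x * Real.cos (w * x)
      + 2 / w ^ 2 * (Real.exp (-x ^ 2) * Real.cos (w * x))) (Set.Ioi 0) :=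
    hki.add (hgi.integrableOn.const_mul _)
  have hg0 : Filter.Tendsto auxg Filter.atTop (nhds 0) := by
    refine tendsto_of_tendsto_of_tendsto_of_le_of_le' tendsto_const_nhds exp_tendsto_aux ?_ ?_
    · filter_upwards [Filter.eventually_ge_atTop 0] with x hx using auxg_nonneg hx
    · filter_upwards [Filter.eventually_ge_atTop 0] with x hx using auxg_le hx
  have ht : Filter.Tendsto (fun x => auxg x * (Real.sin (w * x) / w)
      + (-2 * auxE x) * (Real.cos (w * x) / w ^ 2)) Filter.atTop (nhds 0) := by
    have a : Filter.Tendsto (fun x => auxg x * Real.sin (w * x)) Filter.atTop (nhds 0) := by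
      refine squeeze_zero_norm (a := fun x => |auxg x|) (fun x => ?_) (by simpa using hg0.abs)
      rw [norm_mul]
      exact mul_le_of_le_one_right (norm_nonneg _) (Real.abs_sin_le_one _)
    have b : Filter.Tendsto (fun x => auxE x * Real.cos (w * x)) Filter.atTop (nhds 0) := by
      refine squeeze_zero_norm (a := fun x => |auxE x|) (fun x => ?_)
        (by simpa using auxE_tendsto.abs)
      rw [norm_mul]
      exact mul_le_of_le_one_right (norm_nonneg _) (Real.abs_cos_le_one _)
    have c := (a.mul_const (1 / w)).add (b.mul_const (-2 / w ^ 2))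
    simp only [zero_mul, add_zero] at c
    refine c.congr fun x => ?_
    ring
  have key := integral_Ioi_of_hasDerivAt_of_tendsto' hF hs ht
  rw [integral_add hki (hgi.integrableOn.const_mul _), integral_const_mul, aux_gauss] at key
  have hE0 : auxE 0 = √π / 2 := by
    have := aux_gauss 0
    simpa [auxE] using this
  simp only [mul_zero, Real.sin_zero, Real.cos_zero, hE0, zero_div] at key
  have : ∫ x in Set.Ioi (0:ℝ), auxg x * Real.cos (w * x) = 0 - (0 + -2 * (√π / 2) * (1 / w ^ 2))
     - 2 / w ^ 2 * (√π / 2 * Real.exp (-(w ^ 2 / 4))) := by linarith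
  rw [this]; ring

lemma aux_full (w : ℝ) (hw : w ≠ 0) :
    ∫ x : ℝ, (auxg |x| : ℂ) * Complex.exp (Complex.I * x * w)
    = ((2 * (√π / w ^ 2 * (1 - Real.exp (-(w ^ 2 / 4)))) : ℝ) : ℂ) := by
  have hc : Continuous (fun x : ℝ => (auxg |x| : ℂ) * Complex.exp (Complex.I * x * w)) :=
    (Complex.continuous_ofReal.comp (auxg_cont.comp continuous_abs)).mul (by fun_prop)
  have hi : Integrable (fun x : ℝ => (auxg |x| : ℂ) * Complex.exp (Complex.I * x * w)) := by
    refine aux_int.mono' hc.aestronglyMeasurable (Filter.Eventually.of_forall fun x => ?_)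
    have e : Complex.I * x * w = ((x * w : ℝ) : ℂ) * Complex.I := by push_cast; ring
    rw [norm_mul, e, Complex.norm_exp_ofReal_mul_I, mul_one, Complex.norm_real]
    exact auxg_norm x
  have hn := integral_neg_eq_self
    (fun x : ℝ => (auxg |x| : ℂ) * Complex.exp (Complex.I * x * w)) volume
  have hs := integral_add hi hi.comp_neg
  rw [hn] at hs
  have he : ∀ x : ℝ, (auxg |x| : ℂ) * Complex.exp (Complex.I * x * w)
      + (auxg |-x| : ℂ) * Complex.exp (Complex.I * (-x : ℝ) * w)
      = ((2 * (auxg |x| * Real.cos (w * |x|)) : ℝ) : ℂ) := by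
    intro x
    have hcos : Real.cos (w * |x|) = Real.cos (w * x) := by
      rcases abs_choice x with h | h <;> simp [h]
    rw [abs_neg, hcos]
    push_cast
    have := Complex.two_cos (w * x)
    rw [show (2:ℂ) * (auxg |x| * Complex.cos (w * x)) = auxg |x| * (2 * Complex.cos (w * x)) by ring,
      this]
    rw [mul_add]
    congr 3 <;> ring
  simp only [he] at hs
  rw [integral_complex_ofReal, integral_const_mul,
    integral_comp_abs (f := fun x => auxg x * Real.cos (w * x)), aux_half w hw] at hs
  rw [← two_mul] at hs
  apply mul_left_cancel₀ (two_ne_zero (α := ℂ))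
  rw [← hs]
  push_cast
  ring

/-- Equation (19): the Fourier transform of the Polya kernel constructed from the
Rayleigh distribution with scale `σ`, namely
`k(r) = e^{-r²/(2σ²)} - √π (|r|/(σ√2)) erfc(|r|/(σ√2))`, equals
`(√(2π)/(σt²))(1 - e^{-σ²t²/2})` for `t ≠ 0`. -/
theorem polya_kernel_rayleigh_fourier (σ : ℝ) (hσ : 0 < σ)
    (k : ℝ → ℝ)
    (hk : ∀ r : ℝ,
      k r = Real.exp (-(r ^ 2 / (2 * σ ^ 2)))
        - Real.sqrt π * (|r| / (σ * Real.sqrt 2)) * erfc (|r| / (σ * Real.sqrt 2)))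
    (t : ℝ) (ht : t ≠ 0) :
    ∫ r : ℝ, (k r : ℂ) * Complex.exp (Complex.I * r * t)
      = ((Real.sqrt (2 * π) / (σ * t ^ 2) * (1 - Real.exp (-(σ ^ 2 * t ^ 2 / 2))) : ℝ) : ℂ) := by
  set c : ℝ := σ * √2 with hcdef
  have hc : 0 < c := by positivity
  have hc2 : c ^ 2 = 2 * σ ^ 2 := by
    rw [hcdef, mul_pow, Real.sq_sqrt (by norm_num)]; ring
  have hkg : ∀ r, k r = auxg |r / c| := by
    intro r
    rw [hk r, abs_div, abs_of_pos hc]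
    unfold auxg erfc auxE
    have : (|r| / c) ^ 2 = r ^ 2 / (2 * σ ^ 2) := by rw [div_pow, sq_abs, hc2]
    rw [this]
    have hp : √π ≠ 0 := by positivity
    field_simp
  have h := Measure.integral_comp_div
    (fun x : ℝ => (auxg |x| : ℂ) * Complex.exp (Complex.I * x * (c * t : ℝ))) c
  rw [aux_full (c * t) (by positivity), abs_of_pos hc] at h
  have hl : ∀ r : ℝ, (k r : ℂ) * Complex.exp (Complex.I * r * t)
      = (auxg |r / c| : ℂ) * Complex.exp (Complex.I * (r / c : ℝ) * (c * t : ℝ)) := by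
    intro r
    rw [hkg]
    have : (c : ℂ) ≠ 0 := by exact_mod_cast hc.ne'
    congr 2
    push_cast
    field_simp
  simp only [hl]
  rw [h, Complex.real_smul, ← Complex.ofReal_mul]
  congr 1
  have e : (c * t) ^ 2 = 2 * σ ^ 2 * t ^ 2 := by rw [mul_pow, hc2]
  rw [e, hcdef, Real.sqrt_mul (by norm_num) π,
    show 2 * σ ^ 2 * t ^ 2 / 4 = σ ^ 2 * t ^ 2 / 2 by ring]
  field_simp
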